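/- Let q ∈ L¹[0,1] be a real-valued integrable function and let t ∈ [0,2π) be fixed. Suppose that every eigenvalue λ of the quasi-periodic problem L_t(q) satisfies λ ≥ min{t², (2π−t)²}, and that there is a function m : ℕ → ℝ such that for every n ∈ ℕ (n ≥ 1), m(n) equals either 2nπ − t or 2nπ + t and m(n)² is an eigenvalue of L_t(q). Then q = 0 almost everywhere on [0,1]. -/

import Mathlib

open MeasureTheory Set

/-- `IsQPEigenpair q t lam y g h` says that `y` (with first derivative `g` and
second derivative `h`) is an eigenfunction of the quasi-periodic problem
`L_t(q)` on `[0,1]` with eigenvalue `lam`: `y` is nonzero, continuously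
differentiable on `[0,1]` with derivative `g`, `g` is absolutely continuous
with a.e. derivative `h` (encoded via the fundamental theorem of calculus with
`h` integrable), the equation `-y'' + q y = lam y` holds a.e. on `[0,1]`, and
the quasi-periodic boundary conditions hold. -/
def IsQPEigenpair (q : ℝ → ℝ) (t : ℝ) (lam : ℂ) (y g h : ℝ → ℂ) : Prop :=
  (∃ x ∈ Icc (0:ℝ) 1, y x ≠ 0) ∧
  (∀ x ∈ Icc (0:ℝ) 1, HasDerivWithinAt y (g x) (Icc (0:ℝ) 1) x) ∧
  ContinuousOn g (Icc (0:ℝ) 1) ∧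
  IntegrableOn h (Icc (0:ℝ) 1) ∧
  (∀ x ∈ Icc (0:ℝ) 1, g x = g 0 + ∫ s in (0:ℝ)..x, h s) ∧
  (∀ᵐ x ∂(volume.restrict (Icc (0:ℝ) 1)), -h x + (q x : ℂ) * y x = lam * y x) ∧
  y 1 = Complex.exp (Complex.I * t) * y 0 ∧
  g 1 = Complex.exp (Complex.I * t) * g 0

/-- `lam` is an eigenvalue of the quasi-periodic problem `L_t(q)`. -/
def IsQPEigenvalue (q : ℝ → ℝ) (t : ℝ) (lam : ℂ) : Prop :=
  ∃ y g h : ℝ → ℂ, IsQPEigenpair q t lam y g h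

/-- `f` is absolutely continuous on `[0,1]` with integrable a.e. derivative `f'`. -/
def HasIntegrableDeriv (f f' : ℝ → ℂ) : Prop :=
  IntervalIntegrable f' volume 0 1 ∧ ∀ x ∈ Icc (0:ℝ) 1, f x = f 0 + ∫ s in (0:ℝ)..x, f' s

theorem IntervalIntegrable.absolutelyContinuousOnInterval_intervalIntegral_complex
    {f : ℝ → ℂ} {a b c : ℝ} (h : IntervalIntegrable f volume a b) (hc : c ∈ uIcc a b) :
    AbsolutelyContinuousOnInterval (fun x ↦ ∫ v in c..x, f v) a b := by
  have h1 := h.norm.absolutelyContinuousOnInterval_intervalIntegral hc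
  rw [absolutelyContinuousOnInterval_iff] at h1 ⊢
  intro ε hε
  obtain ⟨δ, hδ, H⟩ := h1 ε hε
  refine ⟨δ, hδ, fun E hE hEδ => lt_of_le_of_lt (Finset.sum_le_sum fun i hi => ?_) (H E hE hEδ)⟩
  have hi1 : (E.2 i).1 ∈ uIcc a b := (hE.1 i hi).1
  have hi2 : (E.2 i).2 ∈ uIcc a b := (hE.1 i hi).2
  have hsub : ∀ x ∈ uIcc a b, IntervalIntegrable f volume c x := fun x hx =>
    h.mono_set (uIcc_subset_uIcc hc hx)
  rw [dist_comm, dist_comm (∫ v in c..(E.2 i).1, ‖f v‖), dist_eq_norm, dist_eq_norm,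
    intervalIntegral.integral_interval_sub_left (hsub _ hi2) (hsub _ hi1),
    intervalIntegral.integral_interval_sub_left (hsub _ hi2).norm (hsub _ hi1).norm]
  exact intervalIntegral.norm_integral_le_abs_integral_norm

theorem AbsolutelyContinuousOnInterval.congr {f g : ℝ → ℂ} {a b : ℝ}
    (hf : AbsolutelyContinuousOnInterval f a b) (h : EqOn f g (uIcc a b)) :
    AbsolutelyContinuousOnInterval g a b := by
  rw [absolutelyContinuousOnInterval_iff] at hf ⊢
  intro ε hε
  obtain ⟨δ, hδ, H⟩ := hf ε hε
  refine ⟨δ, hδ, fun E hE hEδ => lt_of_le_of_lt (Finset.sum_le_sum fun i hi => ?_) (H E hE hEδ)⟩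
  rw [h (hE.1 i hi).1, h (hE.1 i hi).2]

namespace HasIntegrableDeriv

variable {f f' g g' : ℝ → ℂ}

theorem absolutelyContinuous (h : HasIntegrableDeriv f f') :
    AbsolutelyContinuousOnInterval f 0 1 := by
  have h1 := h.1.absolutelyContinuousOnInterval_intervalIntegral_complex
    (c := 0) (by simp)
  have h2 : AbsolutelyContinuousOnInterval (fun _ : ℝ => f 0) 0 1 :=
    (LipschitzWith.const (f 0)).lipschitzOnWith.absolutelyContinuousOnInterval
  refine (h2.add h1).congr fun x hx => ?_
  rw [uIcc_of_le zero_le_one] at hx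
  simp [h.2 x hx]

theorem continuousOn (h : HasIntegrableDeriv f f') : ContinuousOn f (Icc 0 1) := by
  simpa using h.absolutelyContinuous.continuousOn

theorem ae_hasDerivAt (h : HasIntegrableDeriv f f') :
    ∀ᵐ x, x ∈ uIcc (0:ℝ) 1 → HasDerivAt f (f' x) x := by
  have h0 : ∀ᵐ x : ℝ, x ≠ 0 := by simp [ae_iff, measure_singleton]
  have h1 : ∀ᵐ x : ℝ, x ≠ 1 := by simp [ae_iff, measure_singleton]
  filter_upwards [h.1.ae_hasDerivAt_integral, h0, h1] with x hx h0 h1 hxI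
  have := (hx hxI 0 (by simp)).const_add (f 0)
  refine this.congr_of_eventuallyEq ?_
  rw [uIcc_of_le zero_le_one] at hxI
  filter_upwards [Icc_mem_nhds (lt_of_le_of_ne hxI.1 h0.symm) (lt_of_le_of_ne hxI.2 h1)]
    with y hy using h.2 y hy

theorem intervalIntegrable_mul_continuousOn {u v : ℝ → ℂ} (hu : IntervalIntegrable u volume 0 1)
    (hv : ContinuousOn v (Icc 0 1)) : IntervalIntegrable (fun x => u x * v x) volume 0 1 :=
  hu.mul_continuousOn (by simpa using hv)

theorem mul (hf : HasIntegrableDeriv f f') (hg : HasIntegrableDeriv g g') :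
    HasIntegrableDeriv (fun x => f x * g x) (fun x => f' x * g x + f x * g' x) := by
  have hfg : IntervalIntegrable (fun x => f' x * g x + f x * g' x) volume 0 1 := by
    refine (intervalIntegrable_mul_continuousOn hf.1 hg.continuousOn).add ?_
    simpa [mul_comm] using intervalIntegrable_mul_continuousOn hg.1 hf.continuousOn
  refine ⟨hfg, ?_⟩
  have hac := (hf.absolutelyContinuous.smul hg.absolutelyContinuous).sub
    (hfg.absolutelyContinuousOnInterval_intervalIntegral_complex (c := 0) (by simp))
  obtain ⟨C, hC⟩ := hac.const_of_ae_hasDerivAt_zero (by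
    filter_upwards [hf.ae_hasDerivAt, hg.ae_hasDerivAt, hfg.ae_hasDerivAt_integral]
      with x h1 h2 h3 hx
    have := ((h1 hx).mul (h2 hx)).sub (h3 hx 0 (by simp))
    simpa using this)
  intro x hx
  have hx' := hC x (by simpa using hx)
  have h0' := hC 0 (by simp)
  simp only [Pi.sub_apply, smul_eq_mul, Pi.mul_apply, intervalIntegral.integral_same,
    sub_zero] at hx' h0'
  linear_combination hx' - h0'

theorem intervalIntegrable_of_mem (h : HasIntegrableDeriv f f') {x : ℝ} (hx : x ∈ Icc (0:ℝ) 1) :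
    IntervalIntegrable f' volume 0 x :=
  h.1.mono_set (uIcc_subset_uIcc (by simp) (by simpa using hx))

theorem add (hf : HasIntegrableDeriv f f') (hg : HasIntegrableDeriv g g') :
    HasIntegrableDeriv (fun x => f x + g x) (fun x => f' x + g' x) := by
  refine ⟨hf.1.add hg.1, fun x hx => ?_⟩
  simp only [intervalIntegral.integral_add (hf.intervalIntegrable_of_mem hx)
    (hg.intervalIntegrable_of_mem hx)]
  rw [hf.2 x hx, hg.2 x hx]
  ring

theorem const_mul (c : ℂ) (hf : HasIntegrableDeriv f f') :
    HasIntegrableDeriv (fun x => c * f x) (fun x => c * f' x) := by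
  refine ⟨hf.1.const_mul c, fun x hx => ?_⟩
  simp only [intervalIntegral.integral_const_mul]
  rw [hf.2 x hx]
  ring

theorem conj (hf : HasIntegrableDeriv f f') :
    HasIntegrableDeriv (fun x => starRingEnd ℂ (f x)) (fun x => starRingEnd ℂ (f' x)) := by
  refine ⟨?_, fun x hx => ?_⟩
  · have := hf.1
    rw [intervalIntegrable_iff] at this ⊢
    exact Complex.conjCLE.toContinuousLinearMap.integrable_comp this
  · have := Complex.conjCLE.toContinuousLinearMap.intervalIntegral_comp_comm
      (hf.intervalIntegrable_of_mem hx)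
    have h2 : ∫ s in (0:ℝ)..x, starRingEnd ℂ (f' s) = starRingEnd ℂ (∫ s in (0:ℝ)..x, f' s) :=
      this
    simp only [h2]
    rw [hf.2 x hx, map_add]

theorem congr {F F' : ℝ → ℂ} (hf : HasIntegrableDeriv f f') (h : EqOn F f (Icc 0 1))
    (h' : ∀ᵐ x ∂(volume.restrict (Icc (0:ℝ) 1)), F' x = f' x) : HasIntegrableDeriv F F' := by
  have hle : ∀ x ∈ Icc (0:ℝ) 1, ∀ᵐ s ∂(volume.restrict (uIoc 0 x)), F' s = f' s := by
    intro x hx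
    refine ae_restrict_of_ae_restrict_of_subset ?_ h'
    rw [uIoc_of_le hx.1]
    exact fun s hs => ⟨hs.1.le, hs.2.trans hx.2⟩
  refine ⟨hf.1.congr_ae ((hle 1 (by simp)).mono fun x hx => hx.symm), fun x hx => ?_⟩
  rw [h hx, h (by simp), hf.2 x hx]
  congr 1
  refine intervalIntegral.integral_congr_ae ?_
  have := hle x hx
  rw [ae_restrict_iff' measurableSet_uIoc] at this
  exact this.mono fun s hs h => (hs h).symm

theorem of_hasDerivWithinAt (hf : ∀ x ∈ Icc (0:ℝ) 1, HasDerivWithinAt f (f' x) (Icc 0 1) x)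
    (hf' : ContinuousOn f' (Icc 0 1)) : HasIntegrableDeriv f f' := by
  refine ⟨(hf'.mono (by simp)).intervalIntegrable, fun x hx => ?_⟩
  have hsub : Icc 0 x ⊆ Icc (0:ℝ) 1 := Icc_subset_Icc_right hx.2
  rw [intervalIntegral.integral_eq_sub_of_hasDerivAt_of_le hx.1
    (fun y hy => ((hf y (hsub hy)).continuousWithinAt).mono hsub)
    (fun y hy => (hf y (hsub (Ioo_subset_Icc_self hy))).hasDerivAt
      (Icc_mem_nhds hy.1 (hy.2.trans_le hx.2)))
    ((hf'.mono (by simpa [uIcc_of_le hx.1] using hsub)).intervalIntegrable)]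
  ring

theorem of_hasDerivAt (hf : ∀ x, HasDerivAt f (f' x) x) (hf' : Continuous f') :
    HasIntegrableDeriv f f' :=
  of_hasDerivWithinAt (fun x _ => (hf x).hasDerivWithinAt) hf'.continuousOn

theorem hasDerivWithinAt (h : HasIntegrableDeriv f f') (hf' : ContinuousOn f' (Icc 0 1))
    {x : ℝ} (hx : x ∈ Icc (0:ℝ) 1) : HasDerivWithinAt f (f' x) (Icc 0 1) x := by
  have : Fact (x ∈ Icc (0:ℝ) 1) := ⟨hx⟩
  have h1 : HasDerivWithinAt (fun u => ∫ s in (0:ℝ)..u, f' s) (f' x) (Icc 0 1) x :=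
    intervalIntegral.integral_hasDerivWithinAt_right (h.intervalIntegrable_of_mem hx)
      (hf'.stronglyMeasurableAtFilter_nhdsWithin measurableSet_Icc x) (hf' x hx)
  exact (h1.const_add (f 0)).congr (fun y hy => h.2 y hy) (h.2 x hx)

theorem integral_eq_sub (h : HasIntegrableDeriv f f') : ∫ s in (0:ℝ)..1, f' s = f 1 - f 0 := by
  rw [h.2 1 (by simp)]
  ring

theorem sub (hf : HasIntegrableDeriv f f') (hg : HasIntegrableDeriv g g') :
    HasIntegrableDeriv (fun x => f x - g x) (fun x => f' x - g' x) := by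
  simpa [sub_eq_add_neg] using hf.add (hg.const_mul (-1))

theorem of_integral (c : ℂ) (hf : IntervalIntegrable f volume 0 1) :
    HasIntegrableDeriv (fun x => c + ∫ s in (0:ℝ)..x, f s) f :=
  ⟨hf, fun x _ => by simp⟩

end HasIntegrableDeriv

theorem intervalIntegral_norm_le_of_mem {f : ℝ → ℂ} (hf : IntervalIntegrable f volume 0 1)
    {x : ℝ} (hx : x ∈ Icc (0:ℝ) 1) : ∫ s in (0:ℝ)..x, ‖f s‖ ≤ ∫ s in (0:ℝ)..1, ‖f s‖ :=
  intervalIntegral.integral_mono_interval le_rfl hx.1 hx.2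
    (Filter.Eventually.of_forall fun _ => norm_nonneg _) hf.norm

/-- Exponentially weighted growth bounds for solutions of `Z'' = p g + f`. -/
theorem norm_le_of_second_deriv {Z D p g f : ℝ → ℂ} {N K : ℝ} (hK : 0 < K)
    (hN : 0 ≤ N) (hp : IntervalIntegrable p volume 0 1) (hf : IntervalIntegrable f volume 0 1)
    (hg : ContinuousOn g (Icc 0 1)) (hgN : ∀ s ∈ Icc (0:ℝ) 1, ‖g s‖ ≤ N * Real.exp (K * s))
    (hZ : HasIntegrableDeriv Z D) (hD : HasIntegrableDeriv D (fun s => p s * g s + f s))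
    {x : ℝ} (hx : x ∈ Icc (0:ℝ) 1) :
    ‖D x‖ ≤ ‖D 0‖ + (∫ s in (0:ℝ)..1, ‖f s‖)
        + N * (∫ s in (0:ℝ)..1, ‖p s‖) * Real.exp (K * x) ∧
    ‖Z x‖ ≤ ‖Z 0‖ + ‖D 0‖ + (∫ s in (0:ℝ)..1, ‖f s‖)
        + N * (∫ s in (0:ℝ)..1, ‖p s‖) / K * Real.exp (K * x) := by
  set P := ∫ s in (0:ℝ)..1, ‖p s‖
  set F := ∫ s in (0:ℝ)..1, ‖f s‖
  have hP0 : 0 ≤ P := intervalIntegral.integral_nonneg zero_le_one fun _ _ => norm_nonneg _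
  have hF0 : 0 ≤ F := intervalIntegral.integral_nonneg zero_le_one fun _ _ => norm_nonneg _
  have hsub : ∀ {x : ℝ} {u : ℝ → ℂ}, x ∈ Icc (0:ℝ) 1 → IntervalIntegrable u volume 0 1 →
      IntervalIntegrable u volume 0 x := fun {x u} hx hu =>
    hu.mono_set (uIcc_subset_uIcc (by simp) (by simpa using hx))
  have hpg : IntervalIntegrable (fun s => p s * g s) volume 0 1 :=
    HasIntegrableDeriv.intervalIntegrable_mul_continuousOn hp hg
  have hDb : ∀ x ∈ Icc (0:ℝ) 1, ‖D x‖ ≤ ‖D 0‖ + F + N * P * Real.exp (K * x) := by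
    intro x hx
    have h1 : ‖∫ s in (0:ℝ)..x, f s‖ ≤ F :=
      (intervalIntegral.norm_integral_le_integral_norm hx.1).trans
        (intervalIntegral_norm_le_of_mem hf hx)
    have h2 : ‖∫ s in (0:ℝ)..x, p s * g s‖ ≤ N * P * Real.exp (K * x) := by
      calc ‖∫ s in (0:ℝ)..x, p s * g s‖ ≤ ∫ s in (0:ℝ)..x, ‖p s * g s‖ :=
            intervalIntegral.norm_integral_le_integral_norm hx.1
        _ ≤ ∫ s in (0:ℝ)..x, ‖p s‖ * (N * Real.exp (K * x)) := by
            refine intervalIntegral.integral_mono_on hx.1 (hsub hx hpg).norm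
              ((hsub hx hp).norm.mul_const _) fun s hs => ?_
            rw [norm_mul]
            have := hgN s ⟨hs.1, hs.2.trans hx.2⟩
            have h3 : Real.exp (K * s) ≤ Real.exp (K * x) := by gcongr; exact hs.2
            gcongr
            exact this.trans (by gcongr)
        _ = (∫ s in (0:ℝ)..x, ‖p s‖) * (N * Real.exp (K * x)) := by simp
        _ ≤ P * (N * Real.exp (K * x)) := by
            gcongr
            exact intervalIntegral_norm_le_of_mem hp hx
        _ = _ := by ring
    rw [hD.2 x hx, intervalIntegral.integral_add (hsub hx hpg) (hsub hx hf)]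
    calc _ ≤ ‖D 0‖ + (‖∫ s in (0:ℝ)..x, p s * g s‖ + ‖∫ s in (0:ℝ)..x, f s‖) :=
          (norm_add_le _ _).trans (by gcongr; exact norm_add_le _ _)
      _ ≤ _ := by linarith
  refine ⟨hDb x hx, ?_⟩
  have h1 : ‖∫ s in (0:ℝ)..x, D s‖ ≤ ‖D 0‖ + F + N * P / K * Real.exp (K * x) := by
    calc ‖∫ s in (0:ℝ)..x, D s‖ ≤ ∫ s in (0:ℝ)..x, ‖D s‖ :=
          intervalIntegral.norm_integral_le_integral_norm hx.1
      _ ≤ ∫ s in (0:ℝ)..x, (‖D 0‖ + F + N * P * Real.exp (K * s)) := by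
          refine intervalIntegral.integral_mono_on hx.1 (hsub hx hZ.1).norm
            (Continuous.intervalIntegrable (by fun_prop) _ _) fun s hs => ?_
          exact hDb s ⟨hs.1, hs.2.trans hx.2⟩
      _ = (‖D 0‖ + F) * x + N * P / K * (Real.exp (K * x) - 1) := by
          rw [intervalIntegral.integral_eq_sub_of_hasDerivAt
            (f := fun s => (‖D 0‖ + F) * s + N * P / K * Real.exp (K * s))]
          · simp; ring
          · intro s _
            have h1 := ((hasDerivAt_id s).const_mul K).exp.const_mul (N * P / K)
            have h2 := (hasDerivAt_id s).const_mul (‖D 0‖ + F)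
            refine (h2.add h1).congr_deriv ?_
            simp only [id]
            field_simp
          · exact Continuous.intervalIntegrable (by fun_prop) _ _
      _ ≤ _ := by
          have h3 : (‖D 0‖ + F) * x ≤ (‖D 0‖ + F) * 1 := by
            have := norm_nonneg (D 0)
            gcongr; exact hx.2
          have h4 : 0 ≤ N * P / K := by positivity
          linarith
  rw [hZ.2 x hx]
  calc _ ≤ ‖Z 0‖ + ‖∫ s in (0:ℝ)..x, D s‖ := norm_add_le _ _
    _ ≤ _ := by linarith

/-- Existence, with bounds linear in the data, for the initial value problem `z'' = p z + f` with
integrable coefficients. -/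
theorem exists_initialValue_solution {p : ℝ → ℂ} (hp : IntervalIntegrable p volume 0 1) :
    ∃ C > 0, ∀ f : ℝ → ℂ, IntervalIntegrable f volume 0 1 → ∀ a b : ℂ, ∃ z dz : ℝ → ℂ,
      HasIntegrableDeriv z dz ∧ HasIntegrableDeriv dz (fun s => p s * z s + f s) ∧
      z 0 = a ∧ dz 0 = b ∧ ∀ x ∈ Icc (0:ℝ) 1,
        ‖z x‖ ≤ C * (‖a‖ + ‖b‖ + ∫ s in (0:ℝ)..1, ‖f s‖) ∧
        ‖dz x‖ ≤ C * (‖a‖ + ‖b‖ + ∫ s in (0:ℝ)..1, ‖f s‖) := by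
  set P := ∫ s in (0:ℝ)..1, ‖p s‖ with hP
  have hP0 : 0 ≤ P := intervalIntegral.integral_nonneg zero_le_one fun _ _ => norm_nonneg _
  set K := 2 * P + 1 with hK
  have hKpos : 0 < K := by positivity
  have hPK : P / K ≤ 1 / 2 := by rw [div_le_iff₀ hKpos]; linarith
  refine ⟨2 * Real.exp K + 1 + 2 * Real.exp K * P, by positivity, fun f hf a b => ?_⟩
  set F := ∫ s in (0:ℝ)..1, ‖f s‖ with hF
  have hF0 : 0 ≤ F := intervalIntegral.integral_nonneg zero_le_one fun _ _ => norm_nonneg _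
  let G : C(Icc (0:ℝ) 1, ℂ) → ℝ → ℂ := fun u r =>
    (Real.exp (K * r) : ℂ) * IccExtend zero_le_one u r
  have hGc : ∀ u, Continuous (G u) := fun u => by
    have : Continuous (IccExtend (zero_le_one (α := ℝ)) u) := u.continuous.Icc_extend'
    fun_prop
  have hGn : ∀ u s, ‖G u s‖ ≤ ‖u‖ * Real.exp (K * s) := fun u s => by
    simp only [G, norm_mul, Complex.norm_real, Real.norm_eq_abs, abs_of_pos (Real.exp_pos _)]
    rw [mul_comm]
    gcongr
    exact u.norm_coe_le_norm _
  have hR : ∀ u, IntervalIntegrable (fun s => p s * G u s + f s) volume 0 1 := fun u =>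
    (HasIntegrableDeriv.intervalIntegrable_mul_continuousOn hp (hGc u).continuousOn).add hf
  let dz : C(Icc (0:ℝ) 1, ℂ) → ℝ → ℂ := fun u x => b + ∫ s in (0:ℝ)..x, (p s * G u s + f s)
  have hdz : ∀ u, HasIntegrableDeriv (dz u) (fun s => p s * G u s + f s) := fun u =>
    .of_integral b (hR u)
  let z : C(Icc (0:ℝ) 1, ℂ) → ℝ → ℂ := fun u x => a + ∫ s in (0:ℝ)..x, dz u s
  have hz : ∀ u, HasIntegrableDeriv (z u) (dz u) := fun u =>
    .of_integral a ((hdz u).continuousOn.mono (by simp)).intervalIntegrable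
  have hz0 : ∀ u, z u 0 = a := fun u => by simp [z]
  have hdz0 : ∀ u, dz u 0 = b := fun u => by simp [dz]
  let T : C(Icc (0:ℝ) 1, ℂ) → C(Icc (0:ℝ) 1, ℂ) := fun u =>
    ⟨fun x => (Real.exp (-(K * x)) : ℂ) * z u x, by
      have h2 : Continuous fun x : Icc (0:ℝ) 1 => z u x := (hz u).continuousOn.domRestrict
      exact Continuous.mul (by fun_prop) h2⟩
  have hexp : ∀ x : ℝ, Real.exp (-(K * x)) * Real.exp (K * x) = 1 := fun x => by
    rw [← Real.exp_add]; simp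
  have hcontr : ContractingWith (1 / 2) T := by
    refine ⟨by norm_num, LipschitzWith.of_dist_le_mul fun u v => ?_⟩
    rw [ContinuousMap.dist_le (by positivity)]
    intro x
    have hest := (norm_le_of_second_deriv (Z := fun x => z u x - z v x) (f := fun _ => 0)
      (g := G (u - v)) hKpos (norm_nonneg (u - v)) hp (by simp) (hGc _).continuousOn
      (fun s _ => hGn _ s) ((hz u).sub (hz v)) (by
        refine ((hdz u).sub (hdz v)).congr (fun _ _ => rfl) (Filter.Eventually.of_forall ?_)
        intro s
        simp only [G, IccExtend, Function.comp_apply, ContinuousMap.coe_sub, Pi.sub_apply]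
        ring) x.2).2
    simp only [hz0, hdz0, sub_self, norm_zero, intervalIntegral.integral_zero, zero_add] at hest
    have h3 : dist (T u x) (T v x) = Real.exp (-(K * x)) * ‖z u x - z v x‖ := by
      rw [dist_eq_norm]
      change ‖(Real.exp (-(K * x)) : ℂ) * z u x - (Real.exp (-(K * x)) : ℂ) * z v x‖ = _
      rw [← mul_sub, norm_mul, Complex.norm_real, Real.norm_of_nonneg (Real.exp_pos _).le]
    rw [h3, dist_eq_norm]
    calc _ ≤ Real.exp (-(K * x)) * (‖u - v‖ * P / K * Real.exp (K * x)) := by gcongr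
      _ = ‖u - v‖ * (P / K) * (Real.exp (-(K * x)) * Real.exp (K * x)) := by ring
      _ ≤ _ := by
        rw [hexp, mul_one, mul_comm]
        push_cast
        gcongr
  obtain ⟨u, hu⟩ : ∃ u, T u = u := ⟨hcontr.fixedPoint, hcontr.fixedPoint_isFixedPt⟩
  have hGz : ∀ x ∈ Icc (0:ℝ) 1, G u x = z u x := by
    intro x hx
    have h1 : u ⟨x, hx⟩ = (Real.exp (-(K * x)) : ℂ) * z u x := by
      conv_lhs => rw [← hu]
      rfl
    simp only [G, IccExtend_of_mem zero_le_one u hx, h1]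
    rw [← mul_assoc, ← Complex.ofReal_mul, mul_comm (Real.exp _), hexp]
    simp
  have hbound : ∀ x ∈ Icc (0:ℝ) 1, _ := fun x hx =>
    norm_le_of_second_deriv hKpos (norm_nonneg u) hp hf (hGc u).continuousOn
      (fun s _ => hGn u s) (hz u) (hdz u) hx
  simp only [hz0, hdz0, ← hP, ← hF] at hbound
  set M := ‖a‖ + ‖b‖ + F with hM
  have hM0 : 0 ≤ M := by positivity
  have hun : ‖u‖ ≤ 2 * M := by
    have h1 : ‖u‖ ≤ M + ‖u‖ / 2 := by
      rw [ContinuousMap.norm_le _ (by positivity)]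
      intro x
      have h2 : ‖u x‖ = Real.exp (-(K * x)) * ‖z u x‖ := by
        conv_lhs => rw [← hu]
        change ‖(Real.exp (-(K * x)) : ℂ) * z u x‖ = _
        rw [norm_mul, Complex.norm_real, Real.norm_of_nonneg (Real.exp_pos _).le]
      rw [h2]
      calc _ ≤ Real.exp (-(K * x)) * (M + ‖u‖ * P / K * Real.exp (K * x)) := by
            gcongr; exact (hbound x x.2).2
        _ = Real.exp (-(K * x)) * M
            + ‖u‖ * (P / K) * (Real.exp (-(K * x)) * Real.exp (K * x)) := by ring
        _ ≤ 1 * M + ‖u‖ * (1 / 2) * 1 := by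
            rw [hexp]
            gcongr
            exact Real.exp_le_one_iff.2 (by have := x.2.1; simp; positivity)
        _ = _ := by ring
    linarith
  refine ⟨z u, dz u, hz u, ?_, hz0 u, hdz0 u, fun x hx => ?_⟩
  · refine (hdz u).congr (fun _ _ => rfl) ?_
    filter_upwards [ae_restrict_mem measurableSet_Icc] with s hs
    rw [hGz s hs]
  · have hKx : Real.exp (K * x) ≤ Real.exp K := by
      gcongr
      exact mul_le_of_le_one_right hKpos.le hx.2
    constructor
    · rw [← hGz x hx]
      calc _ ≤ ‖u‖ * Real.exp (K * x) := hGn u x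
        _ ≤ 2 * M * Real.exp K := by gcongr
        _ ≤ _ := by nlinarith [mul_nonneg (mul_nonneg (Real.exp_pos K).le hP0) hM0]
    · calc _ ≤ ‖b‖ + F + ‖u‖ * P * Real.exp (K * x) := (hbound x hx).1
        _ ≤ M + 2 * M * P * Real.exp K := by
          gcongr
          rw [hM]; linarith [norm_nonneg a]
        _ ≤ _ := by nlinarith [mul_nonneg (Real.exp_pos K).le hM0]

/-- If the homogeneous quasi-periodic problem for `z'' = p z` has only the trivial solution, then
the inhomogeneous problem is solvable, with a bound on the solution. -/
theorem exists_quasiPeriodic_solution {p : ℝ → ℂ} (hp : IntervalIntegrable p volume 0 1) {e : ℂ}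
    (hne : ∀ z dz : ℝ → ℂ, HasIntegrableDeriv z dz → HasIntegrableDeriv dz (fun s => p s * z s) →
      z 1 = e * z 0 → dz 1 = e * dz 0 → ∀ x ∈ Icc (0:ℝ) 1, z x = 0) :
    ∃ C > 0, ∀ f : ℝ → ℂ, IntervalIntegrable f volume 0 1 → ∃ z dz : ℝ → ℂ,
      HasIntegrableDeriv z dz ∧ HasIntegrableDeriv dz (fun s => p s * z s + f s) ∧
      z 1 = e * z 0 ∧ dz 1 = e * dz 0 ∧
      ∀ x ∈ Icc (0:ℝ) 1, ‖z x‖ ≤ C * ∫ s in (0:ℝ)..1, ‖f s‖ := by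
  obtain ⟨C, hC, H⟩ := exists_initialValue_solution hp
  obtain ⟨c, dc, hc, hdc, hc0, hdc0, hcb⟩ := H (fun _ => 0) (by simp) 1 0
  obtain ⟨s, ds, hs, hds, hs0, hds0, hsb⟩ := H (fun _ => 0) (by simp) 0 1
  have hcomb : ∀ α β : ℂ, HasIntegrableDeriv (fun x => α * c x + β * s x)
      (fun x => α * dc x + β * ds x) := fun α β => (hc.const_mul α).add (hs.const_mul β)
  have hdcomb : ∀ α β : ℂ, HasIntegrableDeriv (fun x => α * dc x + β * ds x)
      (fun x => p x * (α * c x + β * s x)) := fun α β =>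
    ((hdc.const_mul α).add (hds.const_mul β)).congr (fun _ _ => rfl)
      (Filter.Eventually.of_forall fun x => by ring)
  have hker : ∀ α β : ℂ, α * (c 1 - e) + β * s 1 = 0 → α * dc 1 + β * (ds 1 - e) = 0 →
      α = 0 ∧ β = 0 := by
    intro α β h1 h2
    have hz := hne _ _ (hcomb α β) (hdcomb α β)
      (by rw [hc0, hs0]; linear_combination h1) (by rw [hdc0, hds0]; linear_combination h2)
    have hα : α = 0 := by simpa [hc0, hs0] using hz 0 (by simp)
    refine ⟨hα, ?_⟩
    have hd := (hcomb α β).hasDerivWithinAt (hdcomb α β).continuousOn (x := 0) (by simp)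
    have hd0 : HasDerivWithinAt (fun x => α * c x + β * s x) 0 (Icc 0 1) 0 :=
      (hasDerivWithinAt_const (0:ℝ) (Icc (0:ℝ) 1) (0:ℂ)).congr hz (hz 0 (by simp))
    have := (uniqueDiffOn_Icc_zero_one 0 (by simp)).eq_deriv _ hd hd0
    simpa [hdc0, hds0] using this
  set D := (c 1 - e) * (ds 1 - e) - s 1 * dc 1 with hD
  have hD0 : D ≠ 0 := by
    intro h0
    have h1 := hker (-s 1) (c 1 - e) (by ring) (by linear_combination h0)
    have h2 := hker (ds 1 - e) (-dc 1) (by linear_combination h0) (by ring)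
    have h3 := hker 1 0 (by simp [h1.2]) (by simpa using h2.2)
    simp at h3
  set S := ‖c 1 - e‖ + ‖s 1‖ + ‖dc 1‖ + ‖ds 1 - e‖ with hS
  refine ⟨C + 2 * (S * C / ‖D‖) * C, by positivity, fun f hf => ?_⟩
  obtain ⟨w, dw, hw, hdw, hw0, hdw0, hwb⟩ := H f hf 0 0
  simp only [norm_zero, zero_add, norm_one, add_zero, intervalIntegral.integral_zero,
    mul_one] at hcb hsb hwb
  set F := ∫ s in (0:ℝ)..1, ‖f s‖ with hF
  have hF0 : 0 ≤ F := intervalIntegral.integral_nonneg zero_le_one fun _ _ => norm_nonneg _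
  have hcoef : ∀ u v : ℂ, ‖u‖ + ‖v‖ ≤ S → ‖(u * w 1 + v * dw 1) / D‖ ≤ S * C / ‖D‖ * F := by
    intro u v huv
    rw [norm_div, div_mul_eq_mul_div]
    gcongr
    calc ‖u * w 1 + v * dw 1‖ ≤ ‖u‖ * ‖w 1‖ + ‖v‖ * ‖dw 1‖ := by
          simpa using norm_add_le (u * w 1) (v * dw 1)
      _ ≤ ‖u‖ * (C * F) + ‖v‖ * (C * F) := by
          have := hwb 1 (by simp)
          gcongr
          exacts [this.1, this.2]
      _ = (‖u‖ + ‖v‖) * (C * F) := by ring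
      _ ≤ S * (C * F) := by gcongr
      _ = _ := by ring
  set α := (-(ds 1 - e) * w 1 + s 1 * dw 1) / D with hα
  set β := (dc 1 * w 1 + -(c 1 - e) * dw 1) / D with hβ
  have hαb : ‖α‖ ≤ S * C / ‖D‖ * F := hcoef _ _ (by
    rw [norm_neg, hS]; linarith [norm_nonneg (c 1 - e), norm_nonneg (dc 1)])
  have hβb : ‖β‖ ≤ S * C / ‖D‖ * F := hcoef _ _ (by
    rw [norm_neg, hS]; linarith [norm_nonneg (ds 1 - e), norm_nonneg (s 1)])
  refine ⟨fun x => w x + (α * c x + β * s x), fun x => dw x + (α * dc x + β * ds x),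
    hw.add (hcomb α β), ?_, ?_, ?_, fun x hx => ?_⟩
  · exact (hdw.add (hdcomb α β)).congr (fun _ _ => rfl)
      (Filter.Eventually.of_forall fun x => by ring)
  · simp only [hw0, hc0, hs0, hα, hβ]
    field_simp
    rw [hD]
    ring
  · simp only [hdw0, hdc0, hds0, hα, hβ]
    field_simp
    rw [hD]
    ring
  · have h1 : ‖w x + (α * c x + β * s x)‖ ≤ ‖w x‖ + (‖α‖ * ‖c x‖ + ‖β‖ * ‖s x‖) := by
      refine (norm_add_le _ _).trans ?_
      gcongr
      simpa using norm_add_le (α * c x) (β * s x)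
    calc _ ≤ _ := h1
      _ ≤ C * F + (S * C / ‖D‖ * F * C + S * C / ‖D‖ * F * C) := by
          have := (hcb x hx).1
          have := (hsb x hx).1
          have := (hwb x hx).1
          gcongr
      _ = _ := by ring

/-- Continuously differentiable functions on `[0,1]` with `y 1 = exp (i t) * y 0`. -/
structure IsQPTest (t : ℝ) (y dy : ℝ → ℂ) : Prop where
  hasIntegrableDeriv : HasIntegrableDeriv y dy
  continuousOn_deriv : ContinuousOn dy (Icc 0 1)
  boundary : y 1 = Complex.exp (Complex.I * t) * y 0

theorem IsQPTest.continuousOn {t : ℝ} {y dy : ℝ → ℂ} (h : IsQPTest t y dy) :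
    ContinuousOn y (Icc 0 1) := h.hasIntegrableDeriv.continuousOn

theorem IsQPTest.sub_mul {t : ℝ} {y dy z dz : ℝ → ℂ} (hy : IsQPTest t y dy)
    (hz : IsQPTest t z dz) (c : ℂ) :
    IsQPTest t (fun x => y x - c * z x) (fun x => dy x - c * dz x) where
  hasIntegrableDeriv := hy.hasIntegrableDeriv.sub (hz.hasIntegrableDeriv.const_mul c)
  continuousOn_deriv := hy.continuousOn_deriv.sub (continuousOn_const.mul hz.continuousOn_deriv)
  boundary := by simp only [hy.boundary, hz.boundary]; ring

/-- The quadratic form of `-y'' + q y - lam y`. -/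
noncomputable def qpForm (q : ℝ → ℝ) (lam : ℝ) (y dy : ℝ → ℂ) : ℝ :=
  ∫ s in (0:ℝ)..1, (‖dy s‖ ^ 2 + (q s - lam) * ‖y s‖ ^ 2)

/-- Nonnegativity of the quadratic form of `L_t(q) - lam`. -/
def QPFormNonneg (q : ℝ → ℝ) (t lam : ℝ) : Prop :=
  ∀ y dy : ℝ → ℂ, IsQPTest t y dy → 0 ≤ qpForm q lam y dy

theorem intervalIntegrable_zero_one_iff {E : Type*} [NormedAddCommGroup E] {f : ℝ → E} :
    IntervalIntegrable f volume 0 1 ↔ IntegrableOn f (Icc (0:ℝ) 1) := by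
  rw [intervalIntegrable_iff_integrableOn_Icc_of_le zero_le_one]

theorem ContinuousOn.intervalIntegrable_zero_one {E : Type*} [NormedAddCommGroup E] {f : ℝ → E}
    (hf : ContinuousOn f (Icc 0 1)) : IntervalIntegrable f volume 0 1 :=
  (hf.mono (by simp)).intervalIntegrable

theorem ContinuousOn.intervalIntegrable_sq {f : ℝ → ℝ} (hf : ContinuousOn f (Icc 0 1)) :
    IntervalIntegrable (fun s => f s ^ 2) volume 0 1 :=
  (hf.pow 2).intervalIntegrable_zero_one

theorem IntervalIntegrable.mul_continuousOn_zero_one {q f : ℝ → ℝ}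
    (hq : IntervalIntegrable q volume 0 1)
    (hf : ContinuousOn f (Icc 0 1)) : IntervalIntegrable (fun s => q s * f s) volume 0 1 :=
  hq.mul_continuousOn (hf.mono (by simp))

theorem IsQPTest.intervalIntegrable_form {q : ℝ → ℝ} (hq : IntervalIntegrable q volume 0 1)
    {t : ℝ} (lam : ℝ) {y dy : ℝ → ℂ} (h : IsQPTest t y dy) :
    IntervalIntegrable (fun s => ‖dy s‖ ^ 2 + (q s - lam) * ‖y s‖ ^ 2) volume 0 1 :=
  h.continuousOn_deriv.norm.intervalIntegrable_sq.add
    ((hq.sub (by simp)).mul_continuousOn_zero_one (h.continuousOn.norm.pow 2))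

theorem qpForm_sub {q : ℝ → ℝ} (hq : IntervalIntegrable q volume 0 1) {t : ℝ} (lam lam' : ℝ)
    {y dy : ℝ → ℂ} (h : IsQPTest t y dy) :
    qpForm q lam' y dy = qpForm q lam y dy - (lam' - lam) * ∫ s in (0:ℝ)..1, ‖y s‖ ^ 2 := by
  unfold qpForm
  rw [← intervalIntegral.integral_const_mul, ← intervalIntegral.integral_sub
    (h.intervalIntegrable_form hq lam)
    (h.continuousOn.norm.intervalIntegrable_sq.const_mul _)]
  congr 1
  ext s
  ring

theorem QPFormNonneg.mono {q : ℝ → ℝ} (hq : IntervalIntegrable q volume 0 1) {t lam lam' : ℝ}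
    (h : QPFormNonneg q t lam) (hle : lam' ≤ lam) : QPFormNonneg q t lam' := by
  intro y dy hy
  have h1 := h y dy hy
  rw [qpForm_sub hq lam lam' hy]
  have h2 : 0 ≤ ∫ s in (0:ℝ)..1, ‖y s‖ ^ 2 :=
    intervalIntegral.integral_nonneg zero_le_one fun _ _ => by positivity
  nlinarith

theorem HasIntegrableDeriv.integral_re_eq_sub {f f' : ℝ → ℂ} (h : HasIntegrableDeriv f f') :
    ∫ s in (0:ℝ)..1, (f' s).re = (f 1 - f 0).re := by
  rw [← h.integral_eq_sub]
  exact Complex.reCLM.intervalIntegral_comp_comm h.1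

theorem HasIntegrableDeriv.intervalIntegrable_re {f f' : ℝ → ℂ} (h : HasIntegrableDeriv f f') :
    IntervalIntegrable (fun s => (f' s).re) volume 0 1 := by
  have := h.1
  rw [intervalIntegrable_iff] at this ⊢
  exact this.re

theorem sq_integral_le_integral_sq {f : ℝ → ℝ} (hf : ContinuousOn f (Icc 0 1)) :
    (∫ s in (0:ℝ)..1, f s) ^ 2 ≤ ∫ s in (0:ℝ)..1, f s ^ 2 := by
  set m := ∫ s in (0:ℝ)..1, f s with hm
  have h0 : 0 ≤ ∫ s in (0:ℝ)..1, (f s - m) ^ 2 :=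
    intervalIntegral.integral_nonneg zero_le_one fun _ _ => sq_nonneg _
  have h1 : ∫ s in (0:ℝ)..1, (f s - m) ^ 2 = (∫ s in (0:ℝ)..1, f s ^ 2) - 2 * m * m + m ^ 2 := by
    have : ∀ s, (f s - m) ^ 2 = f s ^ 2 - 2 * m * f s + m ^ 2 := fun s => by ring
    simp only [this]
    rw [intervalIntegral.integral_add
      (hf.intervalIntegrable_sq.sub (hf.intervalIntegrable_zero_one.const_mul _))
      (by simp), intervalIntegral.integral_sub hf.intervalIntegrable_sq
      (hf.intervalIntegrable_zero_one.const_mul _), intervalIntegral.integral_const_mul, ← hm]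
    simp
  nlinarith

theorem Complex.exp_I_mul_mul_conj (t : ℝ) :
    Complex.exp (Complex.I * t) * starRingEnd ℂ (Complex.exp (Complex.I * t)) = 1 := by
  rw [Complex.mul_conj, Complex.normSq_eq_norm_sq, mul_comm, Complex.norm_exp_ofReal_mul_I]
  simp

/-- Below the spectrum, nonnegativity of the form persists slightly to the right. -/
theorem QPFormNonneg.exists_add {q : ℝ → ℝ} (hq : IntervalIntegrable q volume 0 1) {t lam : ℝ}
    (h : QPFormNonneg q t lam) (hlam : ¬ IsQPEigenvalue q t lam) :
    ∃ ε > 0, QPFormNonneg q t (lam + ε) := by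
  have hp : IntervalIntegrable (fun s => ((q s - lam : ℝ) : ℂ)) volume 0 1 := by
    have := hq.sub (intervalIntegrable_const (c := lam))
    rw [intervalIntegrable_iff] at this ⊢
    exact this.ofReal
  obtain ⟨C, hC, H⟩ := exists_quasiPeriodic_solution (e := Complex.exp (Complex.I * t)) hp (by
    intro z dz hz hdz hb hdb
    by_contra! hcon
    refine hlam ⟨z, dz, _, hcon, fun x hx => hz.hasDerivWithinAt hdz.continuousOn hx,
      hdz.continuousOn, intervalIntegrable_zero_one_iff.1 hdz.1, hdz.2, ?_, hb, hdb⟩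
    refine Filter.Eventually.of_forall fun x => ?_
    push_cast
    ring)
  refine ⟨1 / C, by positivity, fun y dy hy => ?_⟩
  have hyc := hy.continuousOn
  obtain ⟨z, dz, hz, hdz, hb, hdb, hbd⟩ := H (fun s => -y s) hyc.neg.intervalIntegrable_zero_one
  have hzt : IsQPTest t z dz := ⟨hz, hdz.continuousOn, hb⟩
  set N := ∫ s in (0:ℝ)..1, ‖y s‖ ^ 2 with hN
  have hee := Complex.exp_I_mul_mul_conj t
  have hyz := hy.hasIntegrableDeriv.mul hdz.conj
  have hzz := hz.mul hdz.conj
  have h1 := hyz.integral_re_eq_sub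
  have h2 := hzz.integral_re_eq_sub
  have e1 : y 1 * starRingEnd ℂ (dz 1) - y 0 * starRingEnd ℂ (dz 0) = 0 := by
    rw [hy.boundary, hdb, map_mul]
    linear_combination (y 0 * starRingEnd ℂ (dz 0)) * hee
  have e2 : z 1 * starRingEnd ℂ (dz 1) - z 0 * starRingEnd ℂ (dz 0) = 0 := by
    rw [hb, hdb, map_mul]
    linear_combination (z 0 * starRingEnd ℂ (dz 0)) * hee
  rw [e1, Complex.zero_re] at h1
  rw [e2, Complex.zero_re] at h2
  have hzy : ContinuousOn (fun s => (z s * starRingEnd ℂ (y s)).re) (Icc 0 1) :=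
    Complex.continuous_re.comp_continuousOn
      (hz.continuousOn.mul (Complex.continuous_conj.comp_continuousOn hyc))
  have hR : ∫ s in (0:ℝ)..1, (z s * starRingEnd ℂ (y s)).re ≤ C * N := by
    have hm : (∫ s in (0:ℝ)..1, ‖y s‖) ^ 2 ≤ N := sq_integral_le_integral_sq hyc.norm
    simp only [norm_neg] at hbd
    set m := ∫ s in (0:ℝ)..1, ‖y s‖ with hm'
    calc _ ≤ ∫ s in (0:ℝ)..1, C * m * ‖y s‖ := by
          refine intervalIntegral.integral_mono_on zero_le_one hzy.intervalIntegrable_zero_one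
            (hyc.norm.intervalIntegrable_zero_one.const_mul _) fun s hs => ?_
          refine (Complex.re_le_norm _).trans ?_
          rw [norm_mul, RCLike.norm_conj]
          gcongr
          exact hbd s hs
      _ = C * m ^ 2 := by rw [intervalIntegral.integral_const_mul, ← hm']; ring
      _ ≤ _ := by gcongr
  have key : ∀ τ : ℝ, qpForm q lam (fun x => y x - τ * z x) (fun x => dy x - τ * dz x)
      = qpForm q lam y dy - 2 * τ * N
        + τ ^ 2 * ∫ s in (0:ℝ)..1, (z s * starRingEnd ℂ (y s)).re := by
    intro τ
    have i0 := hy.intervalIntegrable_form hq lam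
    have i1 := hyz.intervalIntegrable_re
    have i2 := hzz.intervalIntegrable_re
    have i3 := hyc.norm.intervalIntegrable_sq
    have i4 := hzy.intervalIntegrable_zero_one
    have hpt : ∀ s, ‖dy s - τ * dz s‖ ^ 2 + (q s - lam) * ‖y s - τ * z s‖ ^ 2
        = (‖dy s‖ ^ 2 + (q s - lam) * ‖y s‖ ^ 2)
        - 2 * τ * (dy s * starRingEnd ℂ (dz s)
          + y s * starRingEnd ℂ (((q s - lam : ℝ) : ℂ) * z s + -y s)).re
        + τ ^ 2 * (dz s * starRingEnd ℂ (dz s)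
          + z s * starRingEnd ℂ (((q s - lam : ℝ) : ℂ) * z s + -y s)).re
        - 2 * τ * ‖y s‖ ^ 2 + τ ^ 2 * (z s * starRingEnd ℂ (y s)).re := by
      intro s
      simp only [← Complex.normSq_eq_norm_sq, Complex.normSq_apply, Complex.sub_re, Complex.sub_im,
        Complex.mul_re, Complex.mul_im, Complex.ofReal_re, Complex.ofReal_im, Complex.add_re,
        Complex.add_im, Complex.conj_re, Complex.conj_im, Complex.neg_re, Complex.neg_im]
      ring
    unfold qpForm
    simp only [hpt]
    rw [intervalIntegral.integral_add ((((i0.sub (i1.const_mul _)).add (i2.const_mul _)).sub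
        (i3.const_mul _))) (i4.const_mul _),
      intervalIntegral.integral_sub ((i0.sub (i1.const_mul _)).add (i2.const_mul _))
        (i3.const_mul _),
      intervalIntegral.integral_add (i0.sub (i1.const_mul _)) (i2.const_mul _),
      intervalIntegral.integral_sub i0 (i1.const_mul _)]
    simp only [intervalIntegral.integral_const_mul]
    rw [h1, h2]
    ring
  have hpos := h _ _ (hy.sub_mul hzt ((1 / C : ℝ) : ℂ))
  rw [key] at hpos
  rw [qpForm_sub hq lam (lam + 1 / C) hy, ← hN]
  have h3 : (1 / C) ^ 2 * ∫ s in (0:ℝ)..1, (z s * starRingEnd ℂ (y s)).re ≤ 1 / C * N := by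
    calc _ ≤ (1 / C) ^ 2 * (C * N) := by gcongr
      _ = _ := by field_simp
  linarith

/-- A one-dimensional Sobolev inequality with parameter. -/
theorem HasIntegrableDeriv.norm_sq_le {y dy : ℝ → ℂ} (hy : HasIntegrableDeriv y dy)
    (hdy : ContinuousOn dy (Icc 0 1)) {c : ℝ} (hc : 0 < c) {x : ℝ} (hx : x ∈ Icc (0:ℝ) 1) :
    ‖y x‖ ^ 2 ≤ 1 / c * (∫ s in (0:ℝ)..1, ‖dy s‖ ^ 2) + (1 + c) * ∫ s in (0:ℝ)..1, ‖y s‖ ^ 2 := by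
  have hyc := hy.continuousOn
  have i1 := hyc.norm.intervalIntegrable_sq
  have i2 := hdy.norm.intervalIntegrable_sq
  have hyy := hy.mul hy.conj
  set J := ∫ s in (0:ℝ)..1, (1 / c * ‖dy s‖ ^ 2 + c * ‖y s‖ ^ 2) with hJ
  have hpt : ∀ s, ‖dy s * starRingEnd ℂ (y s) + y s * starRingEnd ℂ (dy s)‖
      ≤ 1 / c * ‖dy s‖ ^ 2 + c * ‖y s‖ ^ 2 := by
    intro s
    have h1 : ‖dy s * starRingEnd ℂ (y s) + y s * starRingEnd ℂ (dy s)‖ ≤ 2 * (‖dy s‖ * ‖y s‖) := by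
      refine (norm_add_le _ _).trans (le_of_eq ?_)
      simp only [norm_mul, RCLike.norm_conj]
      ring
    refine h1.trans ?_
    have h2 : 0 ≤ 1 / c * (‖dy s‖ - c * ‖y s‖) ^ 2 := by positivity
    have h3 : 1 / c * (‖dy s‖ - c * ‖y s‖) ^ 2
        = 1 / c * ‖dy s‖ ^ 2 + c * ‖y s‖ ^ 2 - 2 * (‖dy s‖ * ‖y s‖) := by field_simp; ring
    linarith
  have hdiff : ∀ s ∈ Icc (0:ℝ) 1, ‖y x‖ ^ 2 ≤ ‖y s‖ ^ 2 + J := by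
    intro s hs
    have h1 : y x * starRingEnd ℂ (y x) - y s * starRingEnd ℂ (y s)
        = ∫ r in s..x, (dy r * starRingEnd ℂ (y r) + y r * starRingEnd ℂ (dy r)) := by
      have a1 := hyy.2 x hx
      have a2 := hyy.2 s hs
      rw [← intervalIntegral.integral_interval_sub_left (hyy.intervalIntegrable_of_mem hx)
        (hyy.intervalIntegrable_of_mem hs)]
      simp only at a1 a2
      rw [a1, a2]
      ring
    have h2 : ‖y x * starRingEnd ℂ (y x) - y s * starRingEnd ℂ (y s)‖ ≤ J := by
      rw [h1]
      refine intervalIntegral.norm_integral_le_integral_norm_uIoc.trans ?_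
      rw [hJ, intervalIntegral.integral_of_le zero_le_one]
      have hi : IntegrableOn (fun s => 1 / c * ‖dy s‖ ^ 2 + c * ‖y s‖ ^ 2) (Ioc 0 1) := by
        have := (i2.const_mul (1 / c)).add (i1.const_mul c)
        rwa [intervalIntegrable_iff_integrableOn_Ioc_of_le zero_le_one] at this
      have hsub : uIoc s x ⊆ Ioc 0 1 := by
        intro r hr
        rcases mem_uIoc.1 hr with h | h
        · exact ⟨hs.1.trans_lt h.1, h.2.trans hx.2⟩
        · exact ⟨hx.1.trans_lt h.1, h.2.trans hs.2⟩
      calc _ ≤ ∫ r in uIoc s x, (1 / c * ‖dy r‖ ^ 2 + c * ‖y r‖ ^ 2) := by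
            refine setIntegral_mono_on ?_ (hi.mono_set hsub) measurableSet_uIoc fun r _ => hpt r
            have := hyy.1.norm
            rw [intervalIntegrable_iff_integrableOn_Ioc_of_le zero_le_one] at this
            exact this.mono_set hsub
        _ ≤ _ := setIntegral_mono_set hi
            (Filter.Eventually.of_forall fun r => by simp only [Pi.zero_apply]; positivity)
            hsub.eventuallyLE
    have h3 := (Complex.re_le_norm _).trans h2
    simp only [Complex.mul_conj, Complex.normSq_eq_norm_sq, Complex.sub_re,
      Complex.ofReal_re] at h3
    linarith
  have h4 : ∫ s in (0:ℝ)..1, (fun _ : ℝ => ‖y x‖ ^ 2) s ≤ ∫ s in (0:ℝ)..1, (‖y s‖ ^ 2 + J) :=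
    intervalIntegral.integral_mono_on zero_le_one (by simp) (i1.add (by simp)) hdiff
  rw [intervalIntegral.integral_add i1 (by simp)] at h4
  simp only [intervalIntegral.integral_const, sub_zero, smul_eq_mul, one_mul] at h4
  rw [hJ, intervalIntegral.integral_add (i2.const_mul _) (i1.const_mul _),
    intervalIntegral.integral_const_mul, intervalIntegral.integral_const_mul] at h4
  linarith

theorem exists_qpFormNonneg {q : ℝ → ℝ} (hq : IntervalIntegrable q volume 0 1) (t : ℝ) :
    ∃ lam, QPFormNonneg q t lam := by
  set κ := ∫ s in (0:ℝ)..1, |q s| with hκ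
  have hκ0 : 0 ≤ κ := intervalIntegral.integral_nonneg zero_le_one fun _ _ => abs_nonneg _
  refine ⟨-(κ * (κ + 2)), fun y dy hy => ?_⟩
  have hyc := hy.continuousOn
  have i1 := hyc.norm.intervalIntegrable_sq
  have i2 := hy.continuousOn_deriv.norm.intervalIntegrable_sq
  have i3 := hq.mul_continuousOn_zero_one (hyc.norm.pow 2)
  set N := ∫ s in (0:ℝ)..1, ‖y s‖ ^ 2 with hN
  set E := ∫ s in (0:ℝ)..1, ‖dy s‖ ^ 2 with hE
  have hE0 : 0 ≤ E := intervalIntegral.integral_nonneg zero_le_one fun _ _ => by positivity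
  set S := 1 / (κ + 1) * E + (1 + (κ + 1)) * N with hS
  have hpt : ∀ s ∈ Icc (0:ℝ) 1, ‖y s‖ ^ 2 ≤ S := fun s hs =>
    hy.hasIntegrableDeriv.norm_sq_le hy.continuousOn_deriv (by positivity) hs
  have hqy : -(κ * S) ≤ ∫ s in (0:ℝ)..1, q s * ‖y s‖ ^ 2 := by
    calc -(κ * S) = ∫ s in (0:ℝ)..1, -S * |q s| := by
          rw [intervalIntegral.integral_const_mul, ← hκ]; ring
      _ ≤ _ := by
          refine intervalIntegral.integral_mono_on zero_le_one (hq.abs.const_mul _) i3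
            fun s hs => ?_
          have h1 : -|q s| * ‖y s‖ ^ 2 ≤ q s * ‖y s‖ ^ 2 := by
            gcongr
            exact neg_abs_le _
          have h2 : |q s| * ‖y s‖ ^ 2 ≤ |q s| * S := by
            gcongr
            exact hpt s hs
          linarith
  have h0 : qpForm q 0 y dy = E + ∫ s in (0:ℝ)..1, q s * ‖y s‖ ^ 2 := by
    unfold qpForm
    simp only [sub_zero]
    exact intervalIntegral.integral_add i2 i3
  rw [qpForm_sub hq 0 _ hy, h0, ← hN]
  have h5 : κ * (1 / (κ + 1) * E) ≤ E := by
    rw [← mul_assoc]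
    refine mul_le_of_le_one_left hE0 ?_
    rw [mul_one_div, div_le_one (by positivity)]
    linarith
  have h6 : κ * S = κ * (1 / (κ + 1) * E) + κ * (κ + 2) * N := by rw [hS]; ring
  linarith

/-- If no number below `μ` is an eigenvalue, the form of `L_t(q) - μ` is nonnegative. -/
theorem qpFormNonneg_of_forall_lt {q : ℝ → ℝ} (hq : IntervalIntegrable q volume 0 1) {t μ : ℝ}
    (h : ∀ lam : ℝ, lam < μ → ¬ IsQPEigenvalue q t lam) : QPFormNonneg q t μ := by
  by_contra hμ
  set A := {lam | QPFormNonneg q t lam} with hA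
  have hne : A.Nonempty := exists_qpFormNonneg hq t
  have hub : μ ∈ upperBounds A := fun lam hlam => by
    by_contra! hlt
    exact hμ (QPFormNonneg.mono hq hlam hlt.le)
  have hbdd : BddAbove A := ⟨μ, hub⟩
  have hs : sSup A ∈ A := by
    intro y dy hy
    by_contra! hneg
    set N := ∫ s in (0:ℝ)..1, ‖y s‖ ^ 2 with hN
    have hN0 : 0 ≤ N := intervalIntegral.integral_nonneg zero_le_one fun _ _ => by positivity
    set δ := -qpForm q (sSup A) y dy / (N + 1) with hδ
    have hδ0 : 0 < δ := div_pos (by linarith) (by positivity)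
    obtain ⟨lam, hlam, hlt⟩ := exists_lt_of_lt_csSup hne (show sSup A - δ < sSup A by linarith)
    have h1 := hlam y dy hy
    rw [qpForm_sub hq (sSup A) lam hy, ← hN] at h1
    have h2 : δ * (N + 1) = -qpForm q (sSup A) y dy := by
      rw [hδ]; field_simp
    nlinarith
  have hlt : sSup A < μ := lt_of_le_of_ne (csSup_le hne hub) fun heq => hμ (heq ▸ hs)
  obtain ⟨ε, hε, hAε⟩ := QPFormNonneg.exists_add hq hs (h _ hlt)
  have := le_csSup hbdd (show sSup A + ε ∈ A from hAε)
  linarith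

theorem eq_zero_of_forall_quadratic_nonneg {a b : ℝ} (h : ∀ ε : ℝ, 0 ≤ ε ^ 2 * a + 2 * ε * b) :
    b = 0 := by
  have h1 := h (-b / (|a| + 1))
  have ha : 0 < |a| + 1 := by positivity
  have h2 : (-b / (|a| + 1)) ^ 2 * a + 2 * (-b / (|a| + 1)) * b
      = b ^ 2 * (a - 2 * (|a| + 1)) / (|a| + 1) ^ 2 := by field_simp; ring
  have h3 : a - 2 * (|a| + 1) < 0 := by linarith [le_abs_self a, abs_nonneg a]
  by_contra hb
  rw [h2] at h1
  exact (div_neg_of_neg_of_pos (mul_neg_of_pos_of_neg (by positivity) h3) (by positivity)).not_ge h1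

/-- If `exp (i τ x)` minimises the form of `L_t(q) - τ²`, the potential vanishes. -/
theorem ae_eq_zero_of_qpFormNonneg {q : ℝ → ℝ} (hq : IntegrableOn q (Icc (0:ℝ) 1)) {t τ : ℝ}
    (hτ : Complex.exp (Complex.I * τ) = Complex.exp (Complex.I * t))
    (hform : QPFormNonneg q t (τ ^ 2)) (hmean : ∫ s in (0:ℝ)..1, q s = 0) :
    ∀ᵐ x ∂(volume.restrict (Icc (0:ℝ) 1)), q x = 0 := by
  have hqi := intervalIntegrable_zero_one_iff.2 hq
  have key : ∀ η : ℝ → ℝ, ContDiff ℝ 1 η → tsupport η ⊆ Ioo 0 1 →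
      ∫ s in (0:ℝ)..1, q s * η s = 0 := by
    intro η hη hsupp
    have hηd : ∀ x, HasDerivAt η (deriv η x) x := fun x =>
      (hη.differentiable (by simp)).differentiableAt.hasDerivAt
    have hηc : Continuous η := hη.continuous
    have hdc : Continuous (deriv η) := hη.continuous_deriv le_rfl
    have h0 : η 0 = 0 := image_eq_zero_of_notMem_tsupport fun h => by simpa using hsupp h
    have h1 : η 1 = 0 := image_eq_zero_of_notMem_tsupport fun h => by simpa using hsupp h
    refine eq_zero_of_forall_quadratic_nonneg
      (a := ∫ s in (0:ℝ)..1, (deriv η s ^ 2 + q s * η s ^ 2)) fun ε => ?_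
    have htest : IsQPTest t
        (fun x => Complex.exp (Complex.I * τ * x) * ((1 + ε * η x : ℝ) : ℂ))
        (fun x => Complex.exp (Complex.I * τ * x) *
          (Complex.I * τ * ((1 + ε * η x : ℝ) : ℂ) + ((ε * deriv η x : ℝ) : ℂ))) := by
      have hcont : Continuous (fun x : ℝ => Complex.exp (Complex.I * τ * x) *
          (Complex.I * τ * ((1 + ε * η x : ℝ) : ℂ) + ((ε * deriv η x : ℝ) : ℂ))) := by fun_prop
      refine ⟨.of_hasDerivAt (fun x => ?_) hcont, hcont.continuousOn, ?_⟩
      · have a1 : HasDerivAt (fun x : ℝ => Complex.exp (Complex.I * τ * x))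
            (Complex.exp (Complex.I * τ * x) * (Complex.I * τ * 1)) x :=
          ((Complex.ofRealCLM.hasDerivAt (x := x)).const_mul (Complex.I * (τ : ℂ))).cexp
        have a2 := (((hηd x).const_mul ε).const_add 1).ofReal_comp
        exact (a1.mul a2).congr_deriv (by ring)
      · simp [h0, h1, hτ]
    have hpos := hform _ _ htest
    have hpt : ∀ s : ℝ, ‖Complex.exp (Complex.I * τ * s) *
          (Complex.I * τ * ((1 + ε * η s : ℝ) : ℂ) + ((ε * deriv η s : ℝ) : ℂ))‖ ^ 2
        + (q s - τ ^ 2) * ‖Complex.exp (Complex.I * τ * s) * ((1 + ε * η s : ℝ) : ℂ)‖ ^ 2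
        = ε ^ 2 * (deriv η s ^ 2 + q s * η s ^ 2) + 2 * ε * (q s * η s) + q s := by
      intro s
      have hn : ‖Complex.exp (Complex.I * τ * s)‖ = 1 := by
        have : Complex.I * τ * s = ((τ * s : ℝ) : ℂ) * Complex.I := by push_cast; ring
        rw [this, Complex.norm_exp_ofReal_mul_I]
      simp only [norm_mul, hn, one_mul]
      simp only [← Complex.normSq_eq_norm_sq, Complex.normSq_apply, Complex.mul_re, Complex.mul_im,
        Complex.ofReal_re, Complex.ofReal_im, Complex.add_re, Complex.add_im, Complex.I_re,
        Complex.I_im]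
      ring
    unfold qpForm at hpos
    simp only [hpt] at hpos
    have i1 : IntervalIntegrable (fun s => deriv η s ^ 2 + q s * η s ^ 2) volume 0 1 :=
      hdc.continuousOn.intervalIntegrable_sq.add
        (hqi.mul_continuousOn_zero_one (hηc.pow 2).continuousOn)
    have i2 : IntervalIntegrable (fun s => q s * η s) volume 0 1 :=
      hqi.mul_continuousOn_zero_one hηc.continuousOn
    rw [intervalIntegral.integral_add ((i1.const_mul _).add (i2.const_mul _)) hqi,
      intervalIntegral.integral_add (i1.const_mul _) (i2.const_mul _), hmean,
      intervalIntegral.integral_const_mul, intervalIntegral.integral_const_mul, add_zero] at hpos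
    exact hpos
  have hae := isOpen_Ioo.ae_eq_zero_of_integral_contDiff_smul_eq_zero (U := Ioo (0:ℝ) 1)
    (f := q) (μ := volume) ((hq.mono_set Ioo_subset_Icc_self).locallyIntegrableOn)
    (fun η hη _ hsupp => by
      rw [← key η (hη.of_le (mod_cast le_top)) hsupp, intervalIntegral.integral_of_le zero_le_one,
        integral_Ioc_eq_integral_Ioo, setIntegral_eq_integral_of_forall_compl_eq_zero]
      · simp [mul_comm]
      · intro x hx
        have : η x = 0 := image_eq_zero_of_notMem_tsupport fun h => hx (hsupp h)
        simp [this])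
  rw [← restrict_Ioo_eq_restrict_Icc, ae_restrict_iff' measurableSet_Ioo]
  exact hae

/-- The amplitude of `exp (k x)` in `y`, by variation of constants. -/
noncomputable def waveAmplitude (k : ℂ) (y g : ℝ → ℂ) (x : ℝ) : ℂ :=
  (y x + 1 / k * g x) * Complex.exp (-k * x) * (1 / 2)

theorem waveAmplitude_add {k : ℂ} (hk : k ≠ 0) (y g : ℝ → ℂ) (x : ℝ) :
    waveAmplitude k y g x * Complex.exp (k * x) + waveAmplitude (-k) y g x * Complex.exp (-k * x)
      = y x := by
  have h : Complex.exp (k * x) * Complex.exp (-k * x) = 1 := by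
    rw [← Complex.exp_add]; simp
  unfold waveAmplitude
  rw [neg_neg]
  have h2 : (1 : ℂ) / -k = -(1 / k) := by field_simp
  rw [h2]
  linear_combination y x * h

theorem HasIntegrableDeriv.waveAmplitude {q : ℝ → ℝ} {k : ℂ} (hk : k ≠ 0) {y g : ℝ → ℂ}
    (hy : HasIntegrableDeriv y g) (hg : HasIntegrableDeriv g (fun x => (q x + k ^ 2) * y x)) :
    HasIntegrableDeriv (waveAmplitude k y g)
      (fun x => 1 / (2 * k) * (q x * y x * Complex.exp (-k * x))) := by
  have he : HasIntegrableDeriv (fun x : ℝ => Complex.exp (-k * x) * (1 / 2))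
      (fun x => Complex.exp (-k * x) * (-k * 1) * (1 / 2)) :=
    .of_hasDerivAt (fun x => (((Complex.ofRealCLM.hasDerivAt (x := x)).const_mul
      (-k)).cexp.mul_const _)) (by fun_prop)
  refine ((hy.add (hg.const_mul (1 / k))).mul he).congr (fun x _ => ?_)
    (Filter.Eventually.of_forall fun x => ?_)
  · simp only [_root_.waveAmplitude, mul_assoc]
  · field_simp
    ring

theorem norm_exp_I_mul_mul (μ x : ℝ) : ‖Complex.exp (Complex.I * μ * x)‖ = 1 := by
  rw [show Complex.I * μ * x = ((μ * x : ℝ) : ℂ) * Complex.I by push_cast; ring,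
    Complex.norm_exp_ofReal_mul_I]

theorem norm_integral_mul_exp_le {q : ℝ → ℝ} (hq : IntervalIntegrable q volume 0 1) {f : ℝ → ℂ}
    {S : ℝ} (hS : ∀ x ∈ Icc (0:ℝ) 1, ‖f x‖ ≤ S) (μ : ℝ) {x : ℝ} (hx : x ∈ Icc (0:ℝ) 1) :
    ‖∫ s in (0:ℝ)..x, (q s * f s * Complex.exp (Complex.I * μ * s))‖
      ≤ (∫ s in (0:ℝ)..1, |q s|) * S := by
  have hS0 : 0 ≤ S := (norm_nonneg _).trans (hS 0 (by simp))
  have hi : IntervalIntegrable (fun s => |q s| * S) volume 0 1 := hq.abs.mul_const S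
  calc _ ≤ ∫ s in (0:ℝ)..x, |q s| * S := by
        refine intervalIntegral.norm_integral_le_of_norm_le hx.1 (Filter.Eventually.of_forall
          fun s hs => ?_) (hi.mono_set (by
            rw [uIcc_of_le hx.1, uIcc_of_le zero_le_one]; exact Icc_subset_Icc_right hx.2))
        rw [norm_mul, norm_mul, norm_exp_I_mul_mul, mul_one, Complex.norm_real, Real.norm_eq_abs]
        gcongr
        exact hS s ⟨hs.1.le, hs.2.trans hx.2⟩
    _ ≤ ∫ s in (0:ℝ)..1, |q s| * S := by
        refine intervalIntegral.integral_mono_interval le_rfl hx.1 hx.2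
          (Filter.Eventually.of_forall fun s => ?_) hi
        simp only [Pi.zero_apply]
        positivity
    _ = _ := intervalIntegral.integral_mul_const _ _

section Eigenfunction

variable {q : ℝ → ℝ} {y g : ℝ → ℂ} {μ S : ℝ} {e : ℂ}

theorem norm_waveAmplitude_sub_le (hq : IntervalIntegrable q volume 0 1) (hμ : μ ≠ 0)
    (hy : HasIntegrableDeriv y g)
    (hg : HasIntegrableDeriv g (fun x => (q x + (Complex.I * μ) ^ 2) * y x))
    (hS : ∀ x ∈ Icc (0:ℝ) 1, ‖y x‖ ≤ S) {x : ℝ} (hx : x ∈ Icc (0:ℝ) 1) :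
    ‖waveAmplitude (Complex.I * μ) y g x - waveAmplitude (Complex.I * μ) y g 0‖
      ≤ (∫ s in (0:ℝ)..1, |q s|) * S / (2 * |μ|) := by
  have hk : Complex.I * μ ≠ 0 := by simp [hμ]
  rw [(hy.waveAmplitude hk hg).2 x hx, add_sub_cancel_left, intervalIntegral.integral_const_mul,
    norm_mul, show ‖(1:ℂ) / (2 * (Complex.I * μ))‖ = 1 / (2 * |μ|) by simp]
  have h := norm_integral_mul_exp_le hq hS (-μ) hx
  simp only [Complex.ofReal_neg, mul_neg] at h
  rw [one_div_mul_eq_div]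
  gcongr

theorem norm_sub_wave_le (hq : IntervalIntegrable q volume 0 1) (hμ : μ ≠ 0)
    (hy : HasIntegrableDeriv y g)
    (hg : HasIntegrableDeriv g (fun x => (q x + (Complex.I * μ) ^ 2) * y x))
    (hS : ∀ x ∈ Icc (0:ℝ) 1, ‖y x‖ ≤ S) {x : ℝ} (hx : x ∈ Icc (0:ℝ) 1) :
    ‖y x - (waveAmplitude (Complex.I * μ) y g 0 * Complex.exp (Complex.I * μ * x)
        + waveAmplitude (Complex.I * -μ) y g 0 * Complex.exp (Complex.I * -μ * x))‖
      ≤ (∫ s in (0:ℝ)..1, |q s|) * S / |μ| := by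
  have hk : Complex.I * μ ≠ 0 := by simp [hμ]
  have h1 := norm_waveAmplitude_sub_le hq hμ hy hg hS hx
  have h2 := norm_waveAmplitude_sub_le hq (neg_ne_zero.2 hμ) hy (by simpa using hg) hS hx
  rw [abs_neg, Complex.ofReal_neg] at h2
  have hn := norm_exp_I_mul_mul (-μ) x
  rw [Complex.ofReal_neg] at hn
  have hw := waveAmplitude_add hk y g x
  rw [← mul_neg] at hw
  rw [← hw]
  calc _ = ‖(waveAmplitude (Complex.I * μ) y g x - waveAmplitude (Complex.I * μ) y g 0)
          * Complex.exp (Complex.I * μ * x) +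
        (waveAmplitude (Complex.I * -μ) y g x - waveAmplitude (Complex.I * -μ) y g 0)
          * Complex.exp (Complex.I * -μ * x)‖ := by congr 1; ring
    _ ≤ _ := norm_add_le _ _
    _ ≤ (∫ s in (0:ℝ)..1, |q s|) * S / (2 * |μ|) + (∫ s in (0:ℝ)..1, |q s|) * S / (2 * |μ|) := by
        rw [norm_mul, norm_mul, norm_exp_I_mul_mul, hn, mul_one, mul_one]
        gcongr
    _ = _ := by field_simp; ring

theorem le_norm_waveAmplitude_add (hq : IntervalIntegrable q volume 0 1) (hμ : μ ≠ 0)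
    (hy : HasIntegrableDeriv y g)
    (hg : HasIntegrableDeriv g (fun x => (q x + (Complex.I * μ) ^ 2) * y x))
    (hS : ∀ x ∈ Icc (0:ℝ) 1, ‖y x‖ ≤ S) (hS' : ∃ x ∈ Icc (0:ℝ) 1, ‖y x‖ = S) :
    S ≤ ‖waveAmplitude (Complex.I * μ) y g 0‖ + ‖waveAmplitude (Complex.I * -μ) y g 0‖
      + (∫ s in (0:ℝ)..1, |q s|) * S / |μ| := by
  obtain ⟨x, hx, hxS⟩ := hS'
  have h1 := norm_sub_wave_le hq hμ hy hg hS hx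
  have hn := norm_exp_I_mul_mul (-μ) x
  rw [Complex.ofReal_neg] at hn
  have h2 := norm_add_le (waveAmplitude (Complex.I * μ) y g 0 * Complex.exp (Complex.I * μ * x))
    (waveAmplitude (Complex.I * -μ) y g 0 * Complex.exp (Complex.I * -μ * x))
  rw [norm_mul, norm_mul, norm_exp_I_mul_mul, hn, mul_one, mul_one] at h2
  have h3 := norm_le_norm_sub_add (y x)
    (waveAmplitude (Complex.I * μ) y g 0 * Complex.exp (Complex.I * μ * x)
        + waveAmplitude (Complex.I * -μ) y g 0 * Complex.exp (Complex.I * -μ * x))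
  linarith

theorem waveAmplitude_one (k : ℂ) (hy1 : y 1 = e * y 0) (hg1 : g 1 = e * g 0) :
    waveAmplitude k y g 1 = e * Complex.exp (-k) * waveAmplitude k y g 0 := by
  simp [waveAmplitude, hy1, hg1]
  ring

/-- The solvability condition for a resonant frequency. -/
theorem norm_waveAmplitude_mul_integral_add_le (hq : IntervalIntegrable q volume 0 1) (hμ : μ ≠ 0)
    (hy : HasIntegrableDeriv y g)
    (hg : HasIntegrableDeriv g (fun x => (q x + (Complex.I * μ) ^ 2) * y x))
    (hS : ∀ x ∈ Icc (0:ℝ) 1, ‖y x‖ ≤ S) (hy1 : y 1 = e * y 0) (hg1 : g 1 = e * g 0)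
    (he : e = Complex.exp (Complex.I * μ)) :
    ‖waveAmplitude (Complex.I * μ) y g 0 * (∫ s in (0:ℝ)..1, q s : ℝ)
        + waveAmplitude (Complex.I * -μ) y g 0 *
          ∫ s in (0:ℝ)..1, q s * Complex.exp (-(2 * Complex.I * μ * s))‖
      ≤ (∫ s in (0:ℝ)..1, |q s|) ^ 2 * S / |μ| := by
  have hk : Complex.I * μ ≠ 0 := by simp [hμ]
  set a := waveAmplitude (Complex.I * μ) y g 0
  set b := waveAmplitude (Complex.I * -μ) y g 0
  have hA := hy.waveAmplitude hk hg
  have h0 : ∫ s in (0:ℝ)..1, q s * y s * Complex.exp (Complex.I * (-μ : ℝ) * s) = 0 := by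
    have h1 := hA.integral_eq_sub
    rw [waveAmplitude_one _ hy1 hg1, he, ← Complex.exp_add, add_neg_cancel, Complex.exp_zero,
      one_mul, sub_self, intervalIntegral.integral_const_mul] at h1
    simpa [hμ] using h1
  have hqc : IntervalIntegrable (fun s => (q s : ℂ)) volume 0 1 := ⟨hq.1.ofReal, hq.2.ofReal⟩
  have hw : Continuous fun s : ℝ => a * Complex.exp (Complex.I * μ * s)
      + b * Complex.exp (Complex.I * -μ * s) := by fun_prop
  have hE : Continuous fun s : ℝ => Complex.exp (Complex.I * (-μ : ℝ) * s) := by fun_prop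
  have hi1 : IntervalIntegrable (fun s => q s * y s * Complex.exp (Complex.I * (-μ : ℝ) * s))
      volume 0 1 :=
    HasIntegrableDeriv.intervalIntegrable_mul_continuousOn
      (HasIntegrableDeriv.intervalIntegrable_mul_continuousOn hqc hy.continuousOn) hE.continuousOn
  have hi2 : IntervalIntegrable (fun s => q s * (a * Complex.exp (Complex.I * μ * s)
      + b * Complex.exp (Complex.I * -μ * s)) * Complex.exp (Complex.I * (-μ : ℝ) * s))
      volume 0 1 :=
    HasIntegrableDeriv.intervalIntegrable_mul_continuousOn
      (HasIntegrableDeriv.intervalIntegrable_mul_continuousOn hqc hw.continuousOn) hE.continuousOn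
  have h2 : a * (∫ s in (0:ℝ)..1, q s : ℝ)
        + b * ∫ s in (0:ℝ)..1, q s * Complex.exp (-(2 * Complex.I * μ * s))
      = -∫ s in (0:ℝ)..1, q s * (y s - (a * Complex.exp (Complex.I * μ * s)
        + b * Complex.exp (Complex.I * -μ * s))) * Complex.exp (Complex.I * (-μ : ℝ) * s) := by
    have h3 : ∀ s : ℝ, q s * (y s - (a * Complex.exp (Complex.I * μ * s)
        + b * Complex.exp (Complex.I * -μ * s))) * Complex.exp (Complex.I * (-μ : ℝ) * s)
        = q s * y s * Complex.exp (Complex.I * (-μ : ℝ) * s) -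
          q s * (a * Complex.exp (Complex.I * μ * s)
        + b * Complex.exp (Complex.I * -μ * s)) * Complex.exp (Complex.I * (-μ : ℝ) * s) :=
      fun s => by ring
    have h4 : ∀ s : ℝ, q s * (a * Complex.exp (Complex.I * μ * s)
        + b * Complex.exp (Complex.I * -μ * s)) * Complex.exp (Complex.I * (-μ : ℝ) * s)
        = a * q s + b * (q s * Complex.exp (-(2 * Complex.I * μ * s))) := by
      intro s
      have e1 : Complex.exp (Complex.I * μ * s) * Complex.exp (Complex.I * (-μ : ℝ) * s) = 1 := by
        rw [← Complex.exp_add]; simp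
      have e2 : Complex.exp (Complex.I * -μ * s) * Complex.exp (Complex.I * (-μ : ℝ) * s)
          = Complex.exp (-(2 * Complex.I * μ * s)) := by
        rw [← Complex.exp_add]; congr 1; push_cast; ring
      linear_combination a * q s * e1 + b * q s * e2
    have hQ : IntervalIntegrable (fun s : ℝ => q s * Complex.exp (-(2 * Complex.I * μ * s)))
        volume 0 1 :=
      HasIntegrableDeriv.intervalIntegrable_mul_continuousOn hqc
        (Continuous.continuousOn (by fun_prop))
    simp only [h3]
    rw [intervalIntegral.integral_sub hi1 hi2, h0]
    simp only [h4]
    rw [intervalIntegral.integral_add (hqc.const_mul a) (hQ.const_mul b),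
      intervalIntegral.integral_const_mul, intervalIntegral.integral_const_mul,
      intervalIntegral.integral_ofReal]
    ring
  rw [h2, norm_neg]
  refine (norm_integral_mul_exp_le hq (fun x hx => norm_sub_wave_le hq hμ hy hg hS hx) (-μ)
    (right_mem_Icc.2 zero_le_one)).trans (le_of_eq (by ring))

end Eigenfunction

/-- An eigenfunction with large frequency `μ` forces the mean of `q` to be small. -/
theorem abs_integral_le_of_eigenfunction {q : ℝ → ℝ} {y g : ℝ → ℂ} {μ : ℝ} {e : ℂ}
    (hq : IntervalIntegrable q volume 0 1) (hμ : μ ≠ 0) (hy : HasIntegrableDeriv y g)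
    (hg : HasIntegrableDeriv g (fun x => (q x + (Complex.I * μ) ^ 2) * y x))
    (hne : ∃ x ∈ Icc (0:ℝ) 1, y x ≠ 0) (hy1 : y 1 = e * y 0) (hg1 : g 1 = e * g 0)
    (he : e = Complex.exp (Complex.I * μ))
    (hlarge : 2 * (∫ s in (0:ℝ)..1, |q s|) * (1 + 1 / ‖e ^ 2 - 1‖) ≤ |μ|) :
    |∫ s in (0:ℝ)..1, q s| ≤ ‖∫ s in (0:ℝ)..1, q s * Complex.exp (-(2 * Complex.I * μ * s))‖
      + ‖∫ s in (0:ℝ)..1, q s * Complex.exp (2 * Complex.I * μ * s)‖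
      + 4 * (∫ s in (0:ℝ)..1, |q s|) ^ 2 * (1 + 1 / ‖e ^ 2 - 1‖) / |μ| := by
  set κ := ∫ s in (0:ℝ)..1, |q s| with hκ
  have hκ0 : 0 ≤ κ := intervalIntegral.integral_nonneg zero_le_one fun _ _ => abs_nonneg _
  have hμ0 : 0 < |μ| := abs_pos.2 hμ
  obtain ⟨x₀, hx₀, hmax⟩ := isCompact_Icc.exists_isMaxOn (nonempty_Icc.2 zero_le_one)
    hy.continuousOn.norm
  set S := ‖y x₀‖ with hSdef
  have hS : ∀ x ∈ Icc (0:ℝ) 1, ‖y x‖ ≤ S := fun x hx => hmax hx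
  have hS0 : 0 < S := by
    obtain ⟨x, hx, hxne⟩ := hne
    exact (norm_pos_iff.2 hxne).trans_le (hS x hx)
  have hamp := le_norm_waveAmplitude_add hq hμ hy hg hS ⟨x₀, hx₀, rfl⟩
  have hsol := norm_waveAmplitude_mul_integral_add_le hq hμ hy hg hS hy1 hg1 he
  have hb1 : waveAmplitude (Complex.I * -μ) y g 1
      = e ^ 2 * waveAmplitude (Complex.I * -μ) y g 0 := by
    rw [waveAmplitude_one _ hy1 hg1, mul_neg, neg_neg, ← he, sq]
  have hbd := norm_waveAmplitude_sub_le hq (neg_ne_zero.2 hμ) hy (by simpa using hg) hS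
    (right_mem_Icc.2 zero_le_one)
  rw [abs_neg, Complex.ofReal_neg, hb1, ← sub_one_mul, norm_mul] at hbd
  set a := waveAmplitude (Complex.I * μ) y g 0
  set b := waveAmplitude (Complex.I * -μ) y g 0 with hb
  set Q := ∫ s in (0:ℝ)..1, q s * Complex.exp (-(2 * Complex.I * μ * s)) with hQ
  set R := ∫ s in (0:ℝ)..1, q s * Complex.exp (2 * Complex.I * μ * s) with hR
  set m := ∫ s in (0:ℝ)..1, q s with hm
  rw [← hκ] at hamp hsol hbd
  have tri : ∀ a b w : ℂ, ‖a‖ * |m| ≤ ‖a * m + b * w‖ + ‖b‖ * ‖w‖ := fun a b w => by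
    have h2 := norm_sub_le (a * m + b * w) (b * w)
    rwa [add_sub_cancel_right, norm_mul, norm_mul, Complex.norm_real, Real.norm_eq_abs] at h2
  have h1 := tri a b Q
  by_cases hres : e ^ 2 = 1
  · rw [hres] at hlarge ⊢
    simp only [sub_self, norm_zero, div_zero, add_zero, mul_one] at hlarge ⊢
    have he' : e = Complex.exp (Complex.I * (-μ : ℝ)) := by
      rw [Complex.ofReal_neg, mul_neg, Complex.exp_neg, ← he]
      exact eq_inv_of_mul_eq_one_left (by rw [← sq, hres])
    have hsol' := norm_waveAmplitude_mul_integral_add_le hq (neg_ne_zero.2 hμ) hy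
      (by simpa using hg) hS hy1 hg1 he'
    simp only [Complex.ofReal_neg, neg_neg, mul_neg, neg_mul, abs_neg] at hsol'
    simp only [mul_neg] at hb
    rw [← hb, ← hκ, ← hm, ← hR] at hsol'
    have h2 := tri b a R
    have hSle : S ≤ 2 * (‖a‖ + ‖b‖) := by
      have : κ * S / |μ| ≤ S / 2 := by
        rw [div_le_iff₀ hμ0]; nlinarith
      linarith
    have hab : 0 < ‖a‖ + ‖b‖ := by linarith
    refine le_of_mul_le_mul_left ?_ hab
    have h3 : κ ^ 2 * S / |μ| ≤ κ ^ 2 * (2 * (‖a‖ + ‖b‖)) / |μ| := by gcongr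
    have h4 : (‖a‖ + ‖b‖) * (‖Q‖ + ‖R‖ + 4 * κ ^ 2 / |μ|)
        = (‖a‖ + ‖b‖) * (‖Q‖ + ‖R‖) + 2 * (κ ^ 2 * (2 * (‖a‖ + ‖b‖)) / |μ|) := by ring
    rw [h4]
    nlinarith [norm_nonneg a, norm_nonneg b, norm_nonneg Q, norm_nonneg R]
  · have hd : 0 < ‖e ^ 2 - 1‖ := norm_pos_iff.2 (sub_ne_zero.2 hres)
    set d := ‖e ^ 2 - 1‖ with hdd
    have hbS : ‖b‖ ≤ κ * S / |μ| * (1 / d) := by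
      rw [mul_one_div, le_div_iff₀ hd, mul_comm]
      refine hbd.trans ?_
      rw [mul_comm 2, ← div_div]
      exact half_le_self (by positivity)
    have hQκ : ‖Q‖ ≤ κ := by
      refine (intervalIntegral.norm_integral_le_integral_norm zero_le_one).trans (le_of_eq ?_)
      refine intervalIntegral.integral_congr fun s _ => ?_
      have := norm_exp_I_mul_mul (-(2 * μ)) s
      rw [show Complex.I * (-(2 * μ) : ℝ) * s = -(2 * Complex.I * μ * s) by push_cast; ring] at this
      simp only [norm_mul, this, mul_one, Complex.norm_real, Real.norm_eq_abs]
    have hSle : S ≤ 2 * ‖a‖ := by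
      have h2 : κ * S / |μ| * (1 + 1 / d) ≤ S / 2 := by
        rw [div_mul_eq_mul_div, div_le_iff₀ hμ0]; nlinarith
      linarith
    have ha : 0 < ‖a‖ := by linarith
    refine le_of_mul_le_mul_left ?_ ha
    have h3 : ‖b‖ * ‖Q‖ ≤ κ * S / |μ| * (1 / d) * κ := by gcongr
    have h4 : κ ^ 2 * S / |μ| * (1 + 1 / d) ≤ κ ^ 2 * (2 * ‖a‖) / |μ| * (1 + 1 / d) := by gcongr
    have h5 : ‖a‖ * (4 * κ ^ 2 * (1 + 1 / d) / |μ|)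
        = 2 * (κ ^ 2 * (2 * ‖a‖) / |μ| * (1 + 1 / d)) := by ring
    have h6 : 0 ≤ κ ^ 2 * (2 * ‖a‖) / |μ| * (1 + 1 / d) := by positivity
    have h7 : 0 ≤ ‖a‖ * (‖Q‖ + ‖R‖) := by positivity
    rw [mul_add, h5]
    have h8 : κ ^ 2 * S / |μ| * (1 + 1 / d) = κ ^ 2 * S / |μ| + κ * S / |μ| * (1 / d) * κ := by ring
    linarith

theorem tendsto_integral_mul_exp (q : ℝ → ℝ) {c : ℝ} (hc : c ≠ 0) :
    Filter.Tendsto (fun μ : ℝ => ∫ s in (0:ℝ)..1, q s * Complex.exp (c * Complex.I * μ * s))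
      (Filter.cocompact ℝ) (nhds 0) := by
  have h := Real.tendsto_integral_exp_smul_cocompact
    (fun s => indicator (Ioc (0:ℝ) 1) (fun s => (q s : ℂ)) s)
  have hscale : Filter.Tendsto (fun μ : ℝ => -(c / (2 * Real.pi)) * μ) (Filter.cocompact ℝ)
      (Filter.cocompact ℝ) :=
    (Homeomorph.mulLeft₀ (-(c / (2 * Real.pi)))
      (neg_ne_zero.2 (div_ne_zero hc (by positivity)))).isClosedEmbedding.tendsto_cocompact
  refine (h.comp hscale).congr fun μ => ?_
  rw [intervalIntegral.integral_of_le zero_le_one, ← integral_indicator measurableSet_Ioc]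
  refine integral_congr_ae (Filter.Eventually.of_forall fun s => ?_)
  simp only [indicator]
  split_ifs
  · rw [Circle.smul_def, Real.fourierChar_apply, smul_eq_mul, mul_comm]
    congr 2
    push_cast
    field_simp
  · simp

/-- If `μ²` is an eigenvalue for arbitrarily large resonant `μ`, then `q` has mean zero. -/
theorem integral_eq_zero_of_isQPEigenvalue {q : ℝ → ℝ} (hq : IntervalIntegrable q volume 0 1)
    {t : ℝ} {μ : ℕ → ℝ} (hμ : Filter.Tendsto μ Filter.atTop (Filter.cocompact ℝ))
    (he : ∀ n, Complex.exp (Complex.I * μ n) = Complex.exp (Complex.I * t))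
    (heig : ∀ n, IsQPEigenvalue q t ((μ n ^ 2 : ℝ) : ℂ)) :
    ∫ s in (0:ℝ)..1, q s = 0 := by
  set e := Complex.exp (Complex.I * t) with hedef
  have habs : Filter.Tendsto (fun n => |μ n|) Filter.atTop Filter.atTop :=
    (tendsto_norm_cocompact_atTop (E := ℝ)).comp hμ
  have hlim := (((tendsto_integral_mul_exp q (c := -2) (by norm_num)).comp hμ).norm.add
    ((tendsto_integral_mul_exp q (c := 2) (by norm_num)).comp hμ).norm).add
    (habs.const_div_atTop (4 * (∫ s in (0:ℝ)..1, |q s|) ^ 2 * (1 + 1 / ‖e ^ 2 - 1‖)))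
  simp only [norm_zero, add_zero] at hlim
  refine abs_eq_zero.1 (le_antisymm (ge_of_tendsto hlim ?_) (abs_nonneg _))
  filter_upwards [habs.eventually_ge_atTop
    (2 * (∫ s in (0:ℝ)..1, |q s|) * (1 + 1 / ‖e ^ 2 - 1‖)), habs.eventually_gt_atTop 0]
    with n hn hpos
  obtain ⟨y, g, h, hne, hyd, hgc, hhi, hgh, heq, hy1, hg1⟩ := heig n
  have hg : HasIntegrableDeriv g h := ⟨intervalIntegrable_zero_one_iff.2 hhi, hgh⟩
  have := abs_integral_le_of_eigenfunction hq (abs_pos.1 hpos) (.of_hasDerivWithinAt hyd hgc)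
    (hg.congr (fun _ _ => rfl) (heq.mono fun x hx => ?_)) hne hy1 hg1 (he n).symm hn
  · simpa [← hedef] using this
  · rw [mul_pow, Complex.I_sq]
    push_cast at hx
    linear_combination hx

/-- Ambarzumyan-type theorem for `L_t(q)` using, for each `n ≥ 1`, an
eigenvalue `m(n)²` where `m(n)` is either `2nπ − t` or `2nπ + t`. -/
theorem ambarzumyan_quasiPeriodic_mixed
    (q : ℝ → ℝ) (hq : IntegrableOn q (Icc (0:ℝ) 1))
    (t : ℝ) (ht : t ∈ Ico (0:ℝ) (2 * Real.pi))
    (hlow : ∀ lam : ℂ, IsQPEigenvalue q t lam →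
      ∃ r : ℝ, lam = (r : ℂ) ∧ min (t ^ 2) ((2 * Real.pi - t) ^ 2) ≤ r)
    (m : ℕ → ℝ)
    (hm : ∀ n : ℕ, 1 ≤ n →
      (m n = 2 * n * Real.pi - t ∨ m n = 2 * n * Real.pi + t) ∧
      IsQPEigenvalue q t (((m n) ^ 2 : ℝ) : ℂ)) :
    ∀ᵐ x ∂(volume.restrict (Icc (0:ℝ) 1)), q x = 0 := by
  have hqi := intervalIntegrable_zero_one_iff.2 hq
  have hperiod : ∀ n : ℤ, Complex.exp (Complex.I * (t + n * (2 * Real.pi) : ℝ))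
      = Complex.exp (Complex.I * t) := fun n => by
    rw [← Complex.exp_periodic.int_mul n (Complex.I * t)]
    congr 1
    push_cast
    ring
  have hfreq : ∀ n : ℕ, ∃ μ : ℝ, Complex.exp (Complex.I * μ) = Complex.exp (Complex.I * t) ∧
      IsQPEigenvalue q t ((μ ^ 2 : ℝ) : ℂ) ∧ n ≤ ‖μ‖ := by
    intro n
    obtain ⟨hn, heig⟩ := hm (n + 1) (by simp)
    have hlarge : (n : ℝ) ≤ m (n + 1) := by
      have hn0 : (0:ℝ) ≤ n := n.cast_nonneg
      push_cast at hn
      rcases hn with h | h <;> rw [h] <;> nlinarith [Real.pi_gt_three, ht.1, ht.2]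
    rcases hn with h | h
    · refine ⟨-m (n + 1), ?_, by rwa [neg_sq], by rw [norm_neg]; exact hlarge.trans (le_abs_self _)⟩
      rw [← hperiod (-((n + 1 : ℕ) : ℤ)), h]
      congr 3
      push_cast
      ring
    · refine ⟨m (n + 1), ?_, heig, hlarge.trans (le_abs_self _)⟩
      rw [← hperiod ((n + 1 : ℕ) : ℤ), h]
      congr 3
      push_cast
      ring
  choose μ hμe hμ hμn using hfreq
  have hmean := integral_eq_zero_of_isQPEigenvalue hqi
    (Metric.cobounded_eq_cocompact (α := ℝ) ▸ tendsto_norm_atTop_iff_cobounded.1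
      (Filter.tendsto_atTop_mono hμn tendsto_natCast_atTop_atTop)) hμe hμ
  have hform := qpFormNonneg_of_forall_lt hqi fun lam hlam h => by
    obtain ⟨r, hr, hle⟩ := hlow lam h
    rw [Complex.ofReal_inj.1 hr] at hlam
    exact hle.not_gt hlam
  rcases min_choice (t ^ 2) ((2 * Real.pi - t) ^ 2) with h | h
  · rw [h] at hform
    exact ae_eq_zero_of_qpFormNonneg hq rfl hform hmean
  · rw [h, ← neg_sq, neg_sub] at hform
    refine ae_eq_zero_of_qpFormNonneg hq ?_ hform hmean
    rw [← hperiod (-1)]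
    congr 3
    push_cast
    ring
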